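/- arXiv:2509.21568 — 2 statements merged into one kernel-verified Lean document; each statement's English description precedes it below -/
import Mathlib

section
/- Let T1 and T2 be two trails of a knot-type 1-linkoid universe (one whose two endpoints lie in the same face). Then T2 can be obtained from T1 by a finite sequence of double exchanges, where each double exchange resmooths exactly two smoothing sites and yields a trail at each step. -/
/-- Number of orbits of a function on a type (used to count vertices/faces of a
combinatorial map). -/
noncomputable def orbCount {D : Type} (f : D → D) : ℕ := Nat.card (Quot (fun a b => f a = b))

/-- A 1-linkoid universe, encoded as a planar combinatorial map on darts (half-edges):
`σ` is the rotation at vertices (4-cycles at crossings, fixed points at the two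
degree-1 endpoints), `α` the edge involution, `col` an alternating checkerboard
colouring of the darts around each crossing, `conn` connectivity, and `euler`
Euler's formula V + F = E + 2 (planarity). -/
structure LinkoidUniverse where
  D : Type
  [finD : Fintype D]
  [decD : DecidableEq D]
  σ : Equiv.Perm D
  α : D → D
  α_invol : Function.Involutive α
  α_ne : ∀ d, α d ≠ d
  col : D → Bool
  col_alt : ∀ d, σ d ≠ d → col (σ d) = ! col d
  tail : D
  head : D
  tail_ne_head : tail ≠ head
  σ_tail : σ tail = tail
  σ_head : σ head = head
  endpoints_only : ∀ d, σ d = d → d = tail ∨ d = head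
  deg4 : ∀ d, σ d ≠ d → (σ ^ 4) d = d ∧ (σ ^ 2) d ≠ d
  conn : ∀ e e' : D, Relation.EqvGen (fun a c => α a = c ∨ σ a = c) e e'
  euler : orbCount (⇑σ) + orbCount (⇑σ ∘ α) = Fintype.card D / 2 + 2

attribute [instance] LinkoidUniverse.finD LinkoidUniverse.decD

namespace LinkoidUniverse

variable (U : LinkoidUniverse)

/-- Vertices are σ-orbits of darts. -/
def Vertex := Quot (fun a b : U.D => U.σ a = b)
/-- Faces are orbits of the face permutation σ ∘ α. -/
def Face := Quot (fun a b : U.D => U.σ (U.α a) = b)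
def vertexOf (d : U.D) : U.Vertex := Quot.mk _ d
def faceOf (d : U.D) : U.Face := Quot.mk _ d
/-- A dart lying at a degree-4 vertex (crossing). -/
def IsCrossingDart (d : U.D) : Prop := U.σ d ≠ d
/-- Crossings: vertices other than the two endpoints. -/
def Crossing := {v : U.Vertex // v ≠ U.vertexOf U.tail ∧ v ≠ U.vertexOf U.head}
/-- Incidence of a face and a vertex (they share a corner dart). -/
def Incident (f : U.Face) (v : U.Vertex) : Prop :=
  ∃ d, U.faceOf d = f ∧ U.vertexOf d = v

/-- A smoothing choice, one Bool per crossing (so constant on σ-cycles). -/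
def ConstOnCycles (b : U.D → Bool) : Prop := ∀ d, b (U.σ d) = b d
/-- The strand-transition map through the smoothed crossings determined by `b`. -/
def trans (b : U.D → Bool) : U.D → U.D :=
  fun e => if U.col e = b e then U.σ e else U.σ.symm e
/-- The diagram with all crossings smoothed according to `b` is connected. -/
def SmoothedConnected (b : U.D → Bool) : Prop :=
  ∀ e e' : U.D, Relation.EqvGen (fun a c => U.α a = c ∨ U.trans b a = c) e e'

/-- A trail: a non-crossing smoothing of every crossing whose result is a single
connected (hence simple) arc from tail to head. -/
structure Trail where
  b : U.D → Bool
  const : U.ConstOnCycles b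
  norm : ∀ d, U.σ d = d → b d = false
  conn : U.SmoothedConnected b

open Classical in
/-- Transition map when only the single crossing containing the dart `d0` is smoothed,
in direction `b0`. -/
noncomputable def transOne (d0 : U.D) (b0 : Bool) : U.D → U.D := fun e =>
  if U.σ.SameCycle d0 e ∧ U.σ e ≠ e then
    (if U.col e = b0 then U.σ e else U.σ.symm e) else U.σ e

/-- Connectivity of the diagram after smoothing only the crossing of `d0` in
direction `b0`. -/
def ConnectedOne (d0 : U.D) (b0 : Bool) : Prop :=
  ∀ e e' : U.D, Relation.EqvGen (fun a c => U.α a = c ∨ U.transOne d0 b0 a = c) e e'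

/-- A nugatory crossing: exactly one of its two smoothings keeps the diagram connected. -/
def Nugatory (d0 : U.D) : Prop := Xor' (U.ConnectedOne d0 true) (U.ConnectedOne d0 false)

/-- The (unordered) pair of faces merged when the crossing `v` is smoothed according
to `b`. -/
def MergesAt (b : U.D → Bool) (v : U.Vertex) (f g : U.Face) : Prop :=
  ∃ d, U.vertexOf d = v ∧ U.σ d ≠ d ∧
    (if b d then ({f, g} : Set U.Face) = {U.faceOf d, U.faceOf ((U.σ ^ 2) d)}
     else ({f, g} : Set U.Face) = {U.faceOf (U.σ d), U.faceOf ((U.σ ^ 3) d)})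

/-- The set of crossings at which two smoothing choices differ. -/
def diffSet (b b' : U.D → Bool) : Set U.Vertex :=
  {v | ∃ d, U.vertexOf d = v ∧ b d ≠ b' d}

end LinkoidUniverse

/-- A starred 1-linkoid universe: the star sits in the face of the dart `star`,
which is the unbounded face. -/
structure StarredLinkoid extends LinkoidUniverse where
  star : D

namespace StarredLinkoid

variable (U : StarredLinkoid)

def outerFace : U.Face := U.faceOf U.star
/-- Bounded faces. -/
def BFace := {f : U.Face // f ≠ U.outerFace}
/-- A clock state: a bijective assignment of each bounded face to an incident crossing
(the marker of the face). -/
def ClockState :=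
  { m : U.BFace → U.Crossing // Function.Bijective m ∧ ∀ f, U.Incident f.1 (m f).1 }

end StarredLinkoid

/-- A starred 1-linkoid universe together with its clockwise and counterclockwise
clock-move relations on clock states (a clock move rotates a pair of markers in
faces sharing a boundary edge, or the head-adjacent marker, by 90 degrees). -/
structure ClockSystem extends StarredLinkoid where
  CW : toStarredLinkoid.ClockState → toStarredLinkoid.ClockState → Prop
  CCW : toStarredLinkoid.ClockState → toStarredLinkoid.ClockState → Prop
  cw_ccw : ∀ s t, CW s t ↔ CCW t s

namespace ClockSystem

variable (C : ClockSystem)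

/-- A clocked state: admits only clockwise clock moves. -/
def IsClocked (s : C.ClockState) : Prop := ∀ t, ¬ C.CCW s t
/-- A counter-clocked state: admits only counterclockwise clock moves. -/
def IsCounterClocked (s : C.ClockState) : Prop := ∀ t, ¬ C.CW s t

end ClockSystem


theorem tr_exact_of_dim {F V E : Type} [Fintype F] [Fintype V] [Fintype E] [DecidableEq E]
    (δ : (F → ZMod 2) →ₗ[ZMod 2] (E → ZMod 2)) (η : (V → ZMod 2) →ₗ[ZMod 2] (E → ZMod 2))
    (hδ : Module.finrank (ZMod 2) (LinearMap.ker δ) ≤ 1)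
    (hη : Module.finrank (ZMod 2) (LinearMap.ker η) ≤ 1)
    (hcard : Fintype.card V + Fintype.card F = Fintype.card E + 2)
    (orth : ∀ f y, η y ⬝ᵥ δ f = 0) (x : E → ZMod 2) (hx : ∀ y, η y ⬝ᵥ x = 0) :
    ∃ f, δ f = x := by
  have hB : (Matrix.toBilin' (1 : Matrix E E (ZMod 2))).Nondegenerate :=
    LinearMap.BilinForm.nondegenerate_toBilin'_of_det_ne_zero' _ (by simp)
  have h1 := LinearMap.finrank_range_add_finrank_ker δ
  have h2 := LinearMap.finrank_range_add_finrank_ker η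
  have h3 := LinearMap.BilinForm.finrank_orthogonal hB (LinearMap.range η)
  simp only [Module.finrank_fintype_fun_eq_card] at h1 h2 h3
  have key : ∀ z : E → ZMod 2, z ∈ (Matrix.toBilin' (1 : Matrix E E (ZMod 2))).orthogonal
      (LinearMap.range η) ↔ ∀ y, η y ⬝ᵥ z = 0 := by
    intro z
    rw [LinearMap.BilinForm.mem_orthogonal_iff]
    simp [Matrix.toBilin'_apply']
  have hle : LinearMap.range δ ≤ (Matrix.toBilin' (1 : Matrix E E (ZMod 2))).orthogonal
      (LinearMap.range η) := by
    rintro _ ⟨f, rfl⟩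
    rw [key]
    exact fun y => orth f y
  have heq := Submodule.eq_of_le_of_finrank_le hle (by omega)
  have : x ∈ LinearMap.range δ := by
    rw [heq, key]; exact hx
  exact this

namespace LinkoidUniverse

variable (U : LinkoidUniverse)

/-- edges -/
def TrEdge := Quot (fun a b : U.D => U.α a = b)

/-- edge of a dart -/
def trEdgeOf (d : U.D) : U.TrEdge := Quot.mk _ d

theorem tr_edge_surj (e : U.TrEdge) : ∃ d, U.trEdgeOf d = e := Quot.exists_rep e
theorem tr_vertex_surj (e : U.Vertex) : ∃ d, U.vertexOf d = e := Quot.exists_rep e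
theorem tr_face_surj (e : U.Face) : ∃ d, U.faceOf d = e := Quot.exists_rep e

noncomputable instance : Fintype U.TrEdge :=
  @Fintype.ofFinite _ (Finite.of_surjective (Quot.mk _) Quot.mk_surjective)
noncomputable instance : Fintype U.Vertex :=
  @Fintype.ofFinite _ (Finite.of_surjective (Quot.mk _) Quot.mk_surjective)
noncomputable instance : Fintype U.Face :=
  @Fintype.ofFinite _ (Finite.of_surjective (Quot.mk _) Quot.mk_surjective)
noncomputable instance : DecidableEq U.TrEdge := Classical.decEq _

theorem tr_edge_eq {a b : U.D} : U.trEdgeOf a = U.trEdgeOf b ↔ b = a ∨ b = U.α a := by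
  constructor
  · intro h
    have h' : Relation.EqvGen _ a b := Quot.eqvGen_exact h
    clear h
    induction h' with
    | rel x y h => exact Or.inr h.symm
    | refl x => exact Or.inl rfl
    | symm x y _ ih => rcases ih with h | h <;> subst h <;> simp [U.α_invol _]
    | trans x y z _ _ i1 i2 =>
      rcases i1 with h | h <;> rcases i2 with h' | h' <;> subst h <;> subst h' <;>
        simp [U.α_invol _]
  · rintro (h | h)
    · rw [h]
    · exact Quot.sound h.symm

/-- symmetric sum over an edge -/
def trSym (h : U.D → ZMod 2) : U.TrEdge → ZMod 2 :=
  Quot.lift (fun d => h d + h (U.α d)) (by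
    rintro a b rfl
    rw [U.α_invol a, add_comm])

theorem trSym_mk (h : U.D → ZMod 2) (d : U.D) :
    U.trSym h (U.trEdgeOf d) = h d + h (U.α d) := rfl

theorem tr_fiber (d : U.D) :
    (Finset.univ.filter (fun a : U.D => U.trEdgeOf a = U.trEdgeOf d)) = {d, U.α d} := by
  ext a
  simp only [Finset.mem_filter, Finset.mem_univ, true_and, Finset.mem_insert,
    Finset.mem_singleton]
  rw [eq_comm, tr_edge_eq]

theorem tr_sum_sym (h : U.D → ZMod 2) : ∑ e, U.trSym h e = ∑ d, h d := by
  rw [← Finset.sum_fiberwise Finset.univ U.trEdgeOf h]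
  refine Finset.sum_congr rfl fun e _ => ?_
  obtain ⟨d, rfl⟩ := U.tr_edge_surj e
  rw [tr_fiber, Finset.sum_pair (U.α_ne d).symm]
  rfl

theorem tr_card_edge : 2 * Fintype.card U.TrEdge = Fintype.card U.D := by
  have := Finset.card_eq_sum_card_fiberwise (s := (Finset.univ : Finset U.D))
    (t := (Finset.univ : Finset U.TrEdge)) (f := U.trEdgeOf) (by simp)
  rw [← Finset.card_univ (α := U.D), this, Finset.sum_const_nat (m := 2), mul_comm]
  · rfl
  intro e _
  obtain ⟨d, rfl⟩ := U.tr_edge_surj e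
  rw [tr_fiber, Finset.card_pair (U.α_ne d).symm]

/-- α as a permutation -/
def trA : Equiv.Perm U.D := U.α_invol.toPerm

theorem trA_apply (d : U.D) : U.trA d = U.α d := rfl

theorem tr_vertex_σ (d : U.D) : U.vertexOf (U.σ d) = U.vertexOf d :=
  (Quot.sound (r := fun a b : U.D => U.σ a = b) rfl).symm
theorem tr_face_φ (d : U.D) : U.faceOf (U.σ (U.α d)) = U.faceOf d :=
  (Quot.sound (r := fun a b : U.D => U.σ (U.α a) = b) rfl).symm

/-- face coboundary -/
def trδ : (U.Face → ZMod 2) →ₗ[ZMod 2] (U.TrEdge → ZMod 2) where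
  toFun f := U.trSym (fun d => f (U.faceOf d))
  map_add' f g := by
    ext e; obtain ⟨d, rfl⟩ := U.tr_edge_surj e; simp [trSym_mk]; ring
  map_smul' c g := by
    ext e; obtain ⟨d, rfl⟩ := U.tr_edge_surj e; simp [trSym_mk]; ring

/-- vertex coboundary -/
def trη : (U.Vertex → ZMod 2) →ₗ[ZMod 2] (U.TrEdge → ZMod 2) where
  toFun f := U.trSym (fun d => f (U.vertexOf d))
  map_add' f g := by
    ext e; obtain ⟨d, rfl⟩ := U.tr_edge_surj e; simp [trSym_mk]; ring
  map_smul' c g := by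
    ext e; obtain ⟨d, rfl⟩ := U.tr_edge_surj e; simp [trSym_mk]; ring

theorem trδ_mk (f : U.Face → ZMod 2) (d : U.D) :
    U.trδ f (U.trEdgeOf d) = f (U.faceOf d) + f (U.faceOf (U.α d)) := rfl

theorem trη_mk (f : U.Vertex → ZMod 2) (d : U.D) :
    U.trη f (U.trEdgeOf d) = f (U.vertexOf d) + f (U.vertexOf (U.α d)) := rfl

theorem tr_z2 {a b : ZMod 2} : a + b = 0 ↔ a = b := by revert a b; decide

theorem tr_ker_δ : Module.finrank (ZMod 2) (LinearMap.ker U.trδ) ≤ 1 := by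
  refine finrank_le_one ⟨fun _ => 1, ?_⟩ ?_
  · ext e; obtain ⟨d, rfl⟩ := U.tr_edge_surj e; simpa [trδ_mk] using tr_z2.2 rfl
  rintro ⟨f, hf⟩
  refine ⟨f (U.faceOf U.tail), ?_⟩
  have hα : ∀ d, f (U.faceOf (U.α d)) = f (U.faceOf d) := by
    intro d
    have := congrFun (LinearMap.mem_ker.1 hf) (U.trEdgeOf d)
    exact (tr_z2.1 this).symm
  have hσ : ∀ d, f (U.faceOf (U.σ d)) = f (U.faceOf d) := by
    intro d
    rw [← hα d, ← U.tr_face_φ (U.α d), U.α_invol d]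
  ext e
  obtain ⟨d, rfl⟩ := U.tr_face_surj e
  have h := U.conn U.tail d
  have : f (U.faceOf U.tail) = f (U.faceOf d) := by
    generalize U.tail = t at h
    induction h with
    | rel x y h => rcases h with rfl | rfl <;> simp [hα, hσ]
    | refl x => rfl
    | symm x y _ ih => exact ih.symm
    | trans x y z _ _ i1 i2 => exact i1.trans i2
  simpa using this

theorem tr_ker_η : Module.finrank (ZMod 2) (LinearMap.ker U.trη) ≤ 1 := by
  refine finrank_le_one ⟨fun _ => 1, ?_⟩ ?_
  · ext e; obtain ⟨d, rfl⟩ := U.tr_edge_surj e; simpa [trη_mk] using tr_z2.2 rfl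
  rintro ⟨f, hf⟩
  refine ⟨f (U.vertexOf U.tail), ?_⟩
  have hα : ∀ d, f (U.vertexOf (U.α d)) = f (U.vertexOf d) := by
    intro d
    have := congrFun (LinearMap.mem_ker.1 hf) (U.trEdgeOf d)
    exact (tr_z2.1 this).symm
  ext e
  obtain ⟨d, rfl⟩ := U.tr_vertex_surj e
  have h := U.conn U.tail d
  have : f (U.vertexOf U.tail) = f (U.vertexOf d) := by
    generalize U.tail = t at h
    induction h with
    | rel x y h => rcases h with rfl | rfl <;> simp [hα, tr_vertex_σ]
    | refl x => rfl
    | symm x y _ ih => exact ih.symm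
    | trans x y z _ _ i1 i2 => exact i1.trans i2
  simpa using this

/-- pairing of a vertex coboundary with a symmetric function -/
theorem tr_pair (y : U.Vertex → ZMod 2) (h : U.D → ZMod 2) :
    U.trη y ⬝ᵥ U.trSym h = ∑ d, y (U.vertexOf d) * (h d + h (U.α d)) := by
  rw [← tr_sum_sym]
  refine Finset.sum_congr rfl fun e _ => ?_
  obtain ⟨d, rfl⟩ := U.tr_edge_surj e
  simp only [trη_mk, trSym_mk, U.α_invol _]
  ring

theorem tr_sum_σ (y : U.Vertex → ZMod 2) (h : U.D → ZMod 2) :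
    ∑ d, y (U.vertexOf d) * (h d + h (U.σ d)) = 0 := by
  simp only [mul_add, Finset.sum_add_distrib]
  rw [tr_z2]
  rw [← Equiv.sum_comp U.σ (fun d => y (U.vertexOf d) * h d)]
  simp [tr_vertex_σ]

theorem tr_orth (f : U.Face → ZMod 2) (y : U.Vertex → ZMod 2) : U.trη y ⬝ᵥ U.trδ f = 0 := by
  have := U.tr_pair y (fun d => f (U.faceOf d))
  refine this.trans ?_
  rw [← U.tr_sum_σ y (fun d => f (U.faceOf d))]
  refine Finset.sum_congr rfl fun d _ => ?_
  rw [← U.tr_face_φ (U.α d), U.α_invol d]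

theorem tr_exists_g {a b : U.D} (h : U.faceOf a = U.faceOf b) :
    ∃ g : U.D → ZMod 2, ∀ d, g (U.σ (U.α d)) + g d =
      (if U.σ (U.α d) = a then 1 else 0) + (if U.σ (U.α d) = b then 1 else 0) := by
  have h' : Relation.EqvGen _ a b := Quot.eqvGen_exact h
  clear h
  induction h' with
  | rel x y h =>
    subst h
    refine ⟨fun d => if d = x then 1 else 0, fun d => ?_⟩
    have : U.σ (U.α d) = U.σ (U.α x) ↔ d = x := by
      rw [U.σ.injective.eq_iff, U.α_invol.injective.eq_iff]
    simp only [this]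
  | refl x =>
    refine ⟨fun _ => 0, fun d => ?_⟩
    rw [add_zero, eq_comm, tr_z2]
  | symm x y _ ih =>
    obtain ⟨g, hg⟩ := ih
    exact ⟨g, fun d => by rw [hg, add_comm]⟩
  | trans x y z _ _ i1 i2 =>
    obtain ⟨g, hg⟩ := i1
    obtain ⟨g', hg'⟩ := i2
    refine ⟨g + g', fun d => ?_⟩
    simp only [Pi.add_apply]
    have e1 := hg d
    have e2 := hg' d
    generalize (if U.σ (U.α d) = y then (1 : ZMod 2) else 0) = Y at *
    have : ∀ a b c d x y z : ZMod 2, a + b = x + y → c + d = y + z →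
      a + c + (b + d) = x + z := by decide
    exact this _ _ _ _ _ _ _ e1 e2

theorem tr_fixed_iff (d : U.D) : U.σ d = d ↔ d = U.tail ∨ d = U.head :=
  ⟨U.endpoints_only d, by rintro (rfl | rfl); exacts [U.σ_tail, U.σ_head]⟩

theorem tr_exists_o2 (hknot : U.faceOf U.tail = U.faceOf U.head) :
    ∃ o : U.D → ZMod 2, (∀ d, o (U.α d) = 1 + o d) ∧ (∀ d, U.σ d ≠ d → o (U.σ d) = 1 + o d) := by
  obtain ⟨g, hg⟩ := U.tr_exists_g hknot
  have hg' : ∀ d, g (U.σ d) + g (U.α d) = if U.σ d = d then 1 else 0 := by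
    intro d
    have := hg (U.α d)
    rw [U.α_invol d] at this
    rw [this]
    have e1 : U.σ d = U.tail ↔ d = U.tail := by
      conv_lhs => rw [← U.σ_tail]
      exact U.σ.injective.eq_iff
    have e2 : U.σ d = U.head ↔ d = U.head := by
      conv_lhs => rw [← U.σ_head]
      exact U.σ.injective.eq_iff
    simp only [e1, e2, U.tr_fixed_iff]
    by_cases h1 : d = U.tail
    · rw [h1]; simp [U.tail_ne_head]
    · simp [h1]
  let c : U.D → ZMod 2 := fun d => if U.col d then 1 else 0
  have hc : ∀ d, c d + c (U.σ d) = 1 + if U.σ d = d then 1 else 0 := by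
    intro d
    by_cases h : U.σ d = d
    · simp only [h, if_true, c]; split_ifs <;> decide
    · simp only [h, if_false, c, U.col_alt d h]
      cases U.col d <;> decide
  let x : U.TrEdge → ZMod 2 := fun e => 1 + U.trSym g e
  have hx : ∀ y, U.trη y ⬝ᵥ x = 0 := by
    intro y
    have : U.trη y ⬝ᵥ x = ∑ d, y (U.vertexOf d) * (1 + (g d + g (U.α d))) := by
      rw [← tr_sum_sym]
      refine Finset.sum_congr rfl fun e _ => ?_
      obtain ⟨d, rfl⟩ := U.tr_edge_surj e
      simp only [trη_mk, trSym_mk, U.α_invol _, x]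
      ring
    rw [this, ← U.tr_sum_σ y (fun d => g d + c d)]
    refine Finset.sum_congr rfl fun d _ => ?_
    congr 1
    have e1 := hg' d
    have e2 := hc d
    generalize (if U.σ d = d then (1 : ZMod 2) else 0) = Y at *
    have : ∀ a b c d e y : ZMod 2, b + c = y → d + e = 1 + y →
      1 + (a + c) = a + d + (b + e) := by decide
    exact this _ _ _ _ _ _ e1 e2
  have hcard : Fintype.card U.Vertex + Fintype.card U.Face = Fintype.card U.TrEdge + 2 := by
    have h := U.euler
    have h2 := U.tr_card_edge
    have e1 : orbCount U.σ = Fintype.card U.Vertex :=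
      Nat.card_eq_fintype_card (α := U.Vertex)
    have e2 : orbCount (U.σ ∘ U.α) = Fintype.card U.Face :=
      Nat.card_eq_fintype_card (α := U.Face)
    omega
  obtain ⟨f, hf⟩ := tr_exact_of_dim U.trδ U.trη U.tr_ker_δ U.tr_ker_η hcard
    (fun f y => U.tr_orth f y) x hx
  have hf' : ∀ d, f (U.faceOf d) + f (U.faceOf (U.α d)) = 1 + (g d + g (U.α d)) :=
    fun d => congrFun hf (U.trEdgeOf d)
  refine ⟨fun d => g d + f (U.faceOf d), fun d => ?_, fun d hd => ?_⟩
  · have := hf' d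
    beta_reduce
    revert this
    generalize f (U.faceOf d) = a
    generalize f (U.faceOf (U.α d)) = b
    generalize g d = c
    generalize g (U.α d) = e
    revert a b c e
    decide
  · have h1 := hf' d
    have h2 := hg' d
    have h3 : f (U.faceOf (U.σ d)) = f (U.faceOf (U.α d)) := by
      rw [← U.tr_face_φ (U.α d), U.α_invol d]
    simp only [hd, if_false] at h2
    rw [tr_z2] at h2
    simp only [h3, h2]
    revert h1
    generalize f (U.faceOf d) = a
    generalize f (U.faceOf (U.α d)) = b
    generalize g d = c
    generalize g (U.α d) = e
    revert a b c e
    decide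

theorem tr_exists_o (hknot : U.faceOf U.tail = U.faceOf U.head) :
    ∃ o : U.D → Bool, (∀ d, o (U.α d) = !o d) ∧ (∀ d, U.σ d ≠ d → o (U.σ d) = !o d) ∧
      o U.tail = true ∧ o U.head = false := by
  obtain ⟨o, h1, h2⟩ := U.tr_exists_o2 hknot
  let p : U.D → Bool := fun d => decide (o d = o U.tail)
  have hz : ∀ a b : ZMod 2, decide (1 + a = b) = !decide (a = b) := by decide
  have p1 : ∀ d, p (U.α d) = !p d := fun d => by simp only [p, h1, hz]
  have p2 : ∀ d, U.σ d ≠ d → p (U.σ d) = !p d := fun d hd => by simp only [p, h2 d hd, hz]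
  have pt : p U.tail = true := by simp [p]
  refine ⟨p, p1, p2, pt, ?_⟩
  let s : U.D → ℤ := fun d => if p d then 1 else -1
  have sα : ∀ d, s (U.α d) = - s d := fun d => by simp only [s, p1]; cases p d <;> simp
  have hs : ∑ d, s d = 0 := by
    have := Equiv.sum_comp U.trA s
    simp only [trA_apply, sα, Finset.sum_neg_distrib] at this
    omega
  have hs2 : ∀ d, s (U.σ d) = - s d + ((if d = U.tail then 2 * s d else 0) +
      (if d = U.head then 2 * s d else 0)) := by
    intro d
    by_cases hd : U.σ d = d
    · rw [hd]
      rcases U.endpoints_only d hd with rfl | rfl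
      · simp [U.tail_ne_head]; ring
      · simp [U.tail_ne_head.symm]; ring
    · have h3 : d ≠ U.tail := by rintro rfl; exact hd U.σ_tail
      have h4 : d ≠ U.head := by rintro rfl; exact hd U.σ_head
      simp only [s, p2 d hd, h3, h4, if_false]; cases p d <;> simp
  have := Equiv.sum_comp U.σ s
  simp only [hs2, Finset.sum_add_distrib, Finset.sum_neg_distrib, hs, Finset.sum_ite_eq',
    Finset.mem_univ, if_true] at this
  simp only [s, pt] at this
  by_contra hh
  simp only [Bool.not_eq_false] at hh
  simp [hh] at this

end LinkoidUniverse

/-- transitivity of a permutation -/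
def TrTransitive {O : Type} (f : Equiv.Perm O) : Prop := ∀ x y, f.SameCycle x y

theorem tr_sign_of_transitive {O : Type} [Fintype O] [DecidableEq O] (f : Equiv.Perm O)
    (hf : TrTransitive f) {p q : O} (hpq : p ≠ q) :
    Equiv.Perm.sign f = -(-1) ^ (Fintype.card O) := by
  have hne : ∀ x, f x ≠ x := by
    intro x hx
    have h1 : x = p := (Equiv.Perm.SameCycle.eq_of_left (hf x p) hx)
    have h2 : x = q := (Equiv.Perm.SameCycle.eq_of_left (hf x q) hx)
    exact hpq (h1.symm.trans h2)
  have hc : f.IsCycle := ⟨p, hne p, fun y _ => hf p y⟩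
  have hs : f.support = Finset.univ := by
    ext x; simp [hne x]
  rw [hc.sign, hs, Finset.card_univ]

/-- first arrival -/
theorem tr_arrive {O : Type} [Fintype O] [DecidableEq O] (f : Equiv.Perm O) {p q x : O}
    (hx : f.SameCycle x p) (hpq : ¬ f.SameCycle p q) :
    (Equiv.swap p q * f).SameCycle x q := by
  obtain ⟨k, hk0, -, hk⟩ := hx.exists_pow_eq''
  have : ∃ k, 0 < k ∧ (f ^ k) x = p := ⟨k, hk0, hk⟩
  classical
  let n := Nat.find this
  obtain ⟨hn0, hn⟩ : 0 < n ∧ (f ^ n) x = p := Nat.find_spec this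
  have hmin : ∀ j, 0 < j → j < n → (f ^ j) x ≠ p := fun j h1 h2 h3 =>
    Nat.find_min this h2 ⟨h1, h3⟩
  have hst : ∀ j : ℕ, f ((f ^ j) x) = (f ^ (j + 1)) x := fun j => by
    rw [pow_succ', Equiv.Perm.mul_apply]
  have hj : ∀ j, j < n → ((Equiv.swap p q * f) ^ j) x = (f ^ j) x := by
    intro j
    induction j with
    | zero => simp
    | succ j ih =>
      intro hj
      rw [pow_succ', Equiv.Perm.mul_apply, ih (by omega), Equiv.Perm.mul_apply, hst]
      apply Equiv.swap_apply_of_ne_of_ne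
      · exact hmin _ (by omega) hj
      · intro h
        apply hpq
        refine hx.symm.trans ⟨((j+1 : ℕ) : ℤ), ?_⟩
        rw [zpow_natCast]; exact h
  refine ⟨(n : ℤ), ?_⟩
  rw [zpow_natCast]
  obtain ⟨m, hm⟩ : ∃ m, n = m + 1 := ⟨n - 1, by omega⟩
  rw [hm, pow_succ', Equiv.Perm.mul_apply, hj m (by omega), Equiv.Perm.mul_apply, hst, ← hm, hn, Equiv.swap_apply_left]

theorem tr_merge {O : Type} [Fintype O] [DecidableEq O] (f : Equiv.Perm O) {p q : O}
    (hall : ∀ x, f.SameCycle x p ∨ f.SameCycle x q) (hpq : ¬ f.SameCycle p q) :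
    TrTransitive (Equiv.swap p q * f) := by
  have hqp : ¬ f.SameCycle q p := fun h => hpq h.symm
  have key : ∀ x, (Equiv.swap p q * f).SameCycle x q := by
    have e := tr_arrive f (Equiv.Perm.SameCycle.refl f p) hpq
    intro x
    rcases hall x with h | h
    · exact tr_arrive f h hpq
    · have := tr_arrive f h hqp
      rw [Equiv.swap_comm] at this
      exact this.trans e
  exact fun x y => (key x).trans (key y).symm

/-- after splitting, every point is in the cycle of p or q -/
theorem tr_split_all {O : Type} [Fintype O] [DecidableEq O] (f : Equiv.Perm O) {p q : O}
    (hf : TrTransitive f) (x : O) :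
    (Equiv.swap p q * f).SameCycle x p ∨ (Equiv.swap p q * f).SameCycle x q := by
  set g := Equiv.swap p q * f with hg
  have hstep : ∀ z, (g.SameCycle z p ∨ g.SameCycle z q) → 
      (g.SameCycle (f z) p ∨ g.SameCycle (f z) q) := by
    intro z hz
    by_cases h1 : f z = p
    · left; rw [h1]
    by_cases h2 : f z = q
    · right; rw [h2]
    have : g z = f z := by
      rw [hg, Equiv.Perm.mul_apply, Equiv.swap_apply_of_ne_of_ne h1 h2]
    rw [← this]
    simpa only [Equiv.Perm.sameCycle_apply_left] using hz
  obtain ⟨k, -, hk⟩ := (hf p x).exists_pow_eq'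
  rw [← hk]
  clear hk
  induction k with
  | zero => left; exact Equiv.Perm.SameCycle.refl _ _
  | succ k ih => rw [pow_succ', Equiv.Perm.mul_apply]; exact hstep _ ih

theorem tr_double {O : Type} [Fintype O] [DecidableEq O] (f g : Equiv.Perm O)
    (hf : TrTransitive f) (hg : TrTransitive g) (s : O → O) (S : Set O)
    (hs : ∀ x, s (s x) = x) (hS : ∀ x ∈ S, s x ∈ S ∧ s x ≠ x)
    (hgS : ∀ x, f x ∈ S → g x = s (f x)) (hgS' : ∀ x, f x ∉ S → g x = f x)
    (hne : S.Nonempty) :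
    ∃ p ∈ S, ∃ q ∈ S, q ≠ p ∧ q ≠ s p ∧
      TrTransitive (Equiv.swap q (s q) * (Equiv.swap p (s p) * f)) := by
  obtain ⟨p, hp⟩ := hne
  have hpp := (hS p hp).2
  set h := Equiv.swap p (s p) * f with hh
  have hall : ∀ x, h.SameCycle x p ∨ h.SameCycle x (s p) := tr_split_all f hf
  have hsplit : ¬ h.SameCycle p (s p) := by
    intro hc
    have ht : TrTransitive h := by
      have : ∀ x, h.SameCycle x p := fun x => (hall x).elim id (fun h' => h'.trans hc.symm)
      exact fun x y => (this x).trans (this y).symm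
    have e1 := tr_sign_of_transitive f hf hpp.symm
    have e2 := tr_sign_of_transitive h ht hpp.symm
    rw [hh, Equiv.Perm.sign_mul, Equiv.Perm.sign_swap hpp.symm, e1] at e2
    rcases neg_one_pow_eq_or ℤˣ (Fintype.card O) with h' | h' <;> rw [h'] at e2 <;>
      revert e2 <;> decide
  -- a site meeting both cycles
  have hex : ∃ q ∈ S, q ≠ p ∧ q ≠ s p ∧ h.SameCycle q p ∧ ¬ h.SameCycle (s q) p := by
    by_contra hno
    push Not at hno
    have hinv : ∀ x, h.SameCycle x p → h.SameCycle (g x) p := by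
      intro x hx
      have hx' : h.SameCycle (h x) p := by simpa using hx
      have hhx : h x = Equiv.swap p (s p) (f x) := by rw [hh, Equiv.Perm.mul_apply]
      by_cases h1 : f x = p
      · rw [hgS x (h1 ▸ hp)]
        rw [hhx, h1, Equiv.swap_apply_left] at hx'
        rwa [h1]
      by_cases h2 : f x = s p
      · rw [hgS x (h2 ▸ (hS p hp).1), h2, hs]
      rw [hhx, Equiv.swap_apply_of_ne_of_ne h1 h2] at hx'
      by_cases h3 : f x ∈ S
      · rw [hgS x h3]
        exact hno _ h3 h1 h2 hx'
      · rw [hgS' x h3]; exact hx'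
    obtain ⟨k, -, hk⟩ := (hg p (s p)).exists_pow_eq'
    have : ∀ k : ℕ, h.SameCycle ((g ^ k) p) p := by
      intro k
      induction k with
      | zero => exact Equiv.Perm.SameCycle.refl _ _
      | succ k ih => rw [pow_succ', Equiv.Perm.mul_apply]; exact hinv _ ih
    have := this k
    rw [hk] at this
    exact hsplit this.symm
  obtain ⟨q, hq, hq1, hq2, hq3, hq4⟩ := hex
  refine ⟨p, hp, q, hq, hq1, hq2, tr_merge h ?_ ?_⟩
  · intro x
    rcases hall x with h' | h'
    · exact Or.inl (h'.trans hq3.symm)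
    · exact Or.inr (h'.trans ((hall (s q)).resolve_left hq4).symm)
  · intro h'
    exact hq4 (h'.symm.trans hq3)

namespace LinkoidUniverse

variable (U : LinkoidUniverse)

/-- a coherent orientation of the darts -/
structure TrOr (o : U.D → Bool) : Prop where
  hα : ∀ d, o (U.α d) = !o d
  hσ : ∀ d, U.σ d ≠ d → o (U.σ d) = !o d
  ht : o U.tail = true
  hh : o U.head = false

variable {U}

theorem tr_const_vertex {b : U.D → Bool} (hb : U.ConstOnCycles b) {d e : U.D}
    (h : U.vertexOf d = U.vertexOf e) : b d = b e := by
  have h' : Relation.EqvGen _ d e := Quot.eqvGen_exact h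
  clear h
  induction h' with
  | rel x y h => rw [← h, hb]
  | refl x => rfl
  | symm x y _ ih => exact ih.symm
  | trans x y z _ _ i1 i2 => exact i1.trans i2

theorem tr_symm_ne {d : U.D} (hd : U.σ d ≠ d) : U.σ (U.σ.symm d) ≠ U.σ.symm d := by
  rw [Equiv.apply_symm_apply]
  intro h
  apply hd
  nth_rewrite 1 [h]
  simp

theorem tr_symm_fix {d : U.D} (hd : U.σ d = d) : U.σ.symm d = d := by
  rw [Equiv.symm_apply_eq, hd]

theorem tr_σ_ne {d : U.D} (hd : U.σ d ≠ d) : U.σ (U.σ d) ≠ U.σ d :=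
  fun h => hd (U.σ.injective h)

theorem tr_σ4 (d : U.D) : U.σ (U.σ (U.σ (U.σ d))) = d := by
  by_cases h : U.σ d = d
  · simp [h]
  · exact (U.deg4 d h).1

theorem tr_σ2_ne {d : U.D} (hd : U.σ d ≠ d) : U.σ (U.σ d) ≠ d := (U.deg4 d hd).2

theorem tr_trans_fix (b : U.D → Bool) {d : U.D} (hd : U.σ d = d) : U.trans b d = d := by
  unfold trans; split_ifs
  exacts [hd, tr_symm_fix hd]

theorem tr_trans_vertex (b : U.D → Bool) (d : U.D) :
    U.vertexOf (U.trans b d) = U.vertexOf d := by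
  unfold trans; split_ifs
  · exact U.tr_vertex_σ d
  · rw [← U.tr_vertex_σ (U.σ.symm d), Equiv.apply_symm_apply]

theorem tr_trans_invol {b : U.D → Bool} (hb : U.ConstOnCycles b) (d : U.D) :
    U.trans b (U.trans b d) = d := by
  by_cases hd : U.σ d = d
  · rw [tr_trans_fix b hd, tr_trans_fix b hd]
  by_cases h : U.col d = b d
  · have e1 : U.trans b d = U.σ d := by simp [trans, h]
    have : U.col (U.σ d) ≠ b (U.σ d) := by rw [hb, U.col_alt d hd, h]; simp
    rw [e1, trans, if_neg this, Equiv.symm_apply_apply]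
  · have e1 : U.trans b d = U.σ.symm d := by simp [trans, h]
    have h2 := U.col_alt _ (tr_symm_ne hd)
    have h3 := hb (U.σ.symm d)
    rw [Equiv.apply_symm_apply] at h2 h3
    have : U.col (U.σ.symm d) = b (U.σ.symm d) := by
      rw [← h3]
      rw [h2] at h
      revert h
      cases U.col (U.σ.symm d) <;> cases b d <;> simp
    rw [e1, trans, if_pos this, Equiv.apply_symm_apply]

theorem TrOr.symm {o : U.D → Bool} (ho : U.TrOr o) {d : U.D} (hd : U.σ d ≠ d) :
    o (U.σ.symm d) = !o d := by
  have := ho.hσ _ (tr_symm_ne hd)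
  rw [Equiv.apply_symm_apply] at this
  rw [this, Bool.not_not]

theorem TrOr.trans {o : U.D → Bool} (ho : U.TrOr o) (b : U.D → Bool) {d : U.D} (hd : U.σ d ≠ d) :
    o (U.trans b d) = !o d := by
  unfold LinkoidUniverse.trans; split_ifs
  exacts [ho.hσ d hd, ho.symm hd]

theorem TrOr.crossing {o : U.D → Bool} (ho : U.TrOr o) {x : U.D} (hx : o x = true)
    (h : U.α x ≠ U.head) : U.σ (U.α x) ≠ U.α x := by
  intro h'
  rcases U.endpoints_only _ h' with h1 | h1
  · have := ho.hα x
    rw [h1, ho.ht, hx] at this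
    simp at this
  · exact h h1

/-- next outgoing dart along the closed up smoothing -/
def trNext {o : U.D → Bool} (ho : U.TrOr o) (b : U.D → Bool) (x : {d // o d = true}) :
    {d // o d = true} :=
  if h : U.α x.1 = U.head then ⟨U.tail, ho.ht⟩ else
    ⟨U.trans b (U.α x.1), by rw [ho.trans b (ho.crossing x.2 h), ho.hα, x.2]; rfl⟩

theorem trNext_head {o : U.D → Bool} (ho : U.TrOr o) (b : U.D → Bool) (x : {d // o d = true})
    (h : U.α x.1 = U.head) : (trNext ho b x).1 = U.tail := by
  simp [trNext, h]

theorem trNext_ne {o : U.D → Bool} (ho : U.TrOr o) (b : U.D → Bool) (x : {d // o d = true})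
    (h : U.α x.1 ≠ U.head) : (trNext ho b x).1 = U.trans b (U.α x.1) := by
  simp [trNext, h]

theorem trNext_inj {o : U.D → Bool} (ho : U.TrOr o) {b : U.D → Bool} (hb : U.ConstOnCycles b) :
    Function.Injective (trNext ho b) := by
  have aux : ∀ x : {d // o d = true}, U.α x.1 ≠ U.head → U.trans b (U.α x.1) ≠ U.tail := by
    intro x hx h
    have := tr_trans_invol hb (U.α x.1)
    rw [h, tr_trans_fix b U.σ_tail] at this
    apply ho.crossing x.2 hx
    rw [← this, U.σ_tail]
  intro x y hxy
  have hxy' := congrArg Subtype.val hxy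
  apply Subtype.ext
  by_cases hx : U.α x.1 = U.head <;> by_cases hy : U.α y.1 = U.head
  · exact U.α_invol.injective (hx.trans hy.symm)
  · rw [trNext_head ho b x hx, trNext_ne ho b y hy] at hxy'
    exact absurd hxy'.symm (aux y hy)
  · rw [trNext_ne ho b x hx, trNext_head ho b y hy] at hxy'
    exact absurd hxy' (aux x hx)
  · rw [trNext_ne ho b x hx, trNext_ne ho b y hy] at hxy'
    have := congrArg (U.trans b) hxy'
    rw [tr_trans_invol hb, tr_trans_invol hb] at this
    exact U.α_invol.injective this

/-- the permutation of outgoing darts -/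
noncomputable def trPerm {o : U.D → Bool} (ho : U.TrOr o) {b : U.D → Bool}
    (hb : U.ConstOnCycles b) : Equiv.Perm {d // o d = true} :=
  Equiv.ofBijective (trNext ho b) (Finite.injective_iff_bijective.1 (trNext_inj ho hb))

theorem trPerm_apply {o : U.D → Bool} (ho : U.TrOr o) {b : U.D → Bool}
    (hb : U.ConstOnCycles b) (x) : trPerm ho hb x = trNext ho b x := rfl

theorem TrOr.σ2 {o : U.D → Bool} (ho : U.TrOr o) (d : U.D) : o (U.σ (U.σ d)) = o d := by
  by_cases h : U.σ d = d
  · simp [h]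
  · rw [ho.hσ _ (tr_σ_ne h), ho.hσ _ h, Bool.not_not]

/-- the opposite dart -/
def trOpp {o : U.D → Bool} (ho : U.TrOr o) (x : {d // o d = true}) : {d // o d = true} :=
  ⟨U.σ (U.σ x.1), by rw [ho.σ2, x.2]⟩

theorem trOpp_trOpp {o : U.D → Bool} (ho : U.TrOr o) (x : {d // o d = true}) :
    trOpp ho (trOpp ho x) = x := Subtype.ext (tr_σ4 x.1)

theorem trNext_change {o : U.D → Bool} (ho : U.TrOr o) {b b' : U.D → Bool}
    (hb : U.ConstOnCycles b) (hb' : U.ConstOnCycles b') (x : {d // o d = true}) :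
    trNext ho b' x = if b (trNext ho b x).1 = b' (trNext ho b x).1 then trNext ho b x
      else trOpp ho (trNext ho b x) := by
  by_cases hx : U.α x.1 = U.head
  · have e1 := trNext_head ho b x hx
    have e2 := trNext_head ho b' x hx
    split_ifs
    · exact Subtype.ext (e2.trans e1.symm)
    · apply Subtype.ext
      simp only [trOpp, e1, e2, U.σ_tail]
  · have e1 := trNext_ne ho b x hx
    have e2 := trNext_ne ho b' x hx
    have c := ho.crossing x.2 hx
    have v := tr_trans_vertex b (U.α x.1)
    rw [← e1] at v
    rw [tr_const_vertex hb v, tr_const_vertex hb' v]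
    generalize U.α x.1 = e at *
    have h4 := tr_σ4 e
    have h4' : U.σ (U.σ (U.σ e)) = U.σ.symm e := by
      rw [Equiv.eq_symm_apply]; exact h4
    split_ifs with h
    · apply Subtype.ext
      rw [e1, e2]
      simp only [LinkoidUniverse.trans, h]
    · apply Subtype.ext
      simp only [trOpp, e1, e2, LinkoidUniverse.trans]
      by_cases h1 : U.col e = b e
      · rw [if_pos h1, if_neg (by rw [h1]; exact h), h4']
      · rw [if_neg h1, if_pos (by revert h h1; cases U.col e <;> cases b e <;> cases b' e <;> simp)]
        simp

theorem tr_vertex_iff {d e : U.D} : U.vertexOf e = U.vertexOf d ↔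
    (e = d ∨ e = U.σ d ∨ e = U.σ (U.σ d) ∨ e = U.σ (U.σ (U.σ d))) := by
  constructor
  · intro h
    have h' : Relation.EqvGen _ d e := Quot.eqvGen_exact h.symm
    have gen : ∀ x y : U.D, Relation.EqvGen (fun a b => U.σ a = b) x y →
        (y = x ∨ y = U.σ x ∨ y = U.σ (U.σ x) ∨ y = U.σ (U.σ (U.σ x))) := by
      intro x y hxy
      induction hxy with
      | rel x y h => exact Or.inr (Or.inl h.symm)
      | refl x => exact Or.inl rfl
      | symm x y _ ih =>
        rcases ih with h | h | h | h <;> subst h <;> simp [tr_σ4]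
      | trans x y z _ _ i1 i2 =>
        rcases i1 with h | h | h | h <;> rcases i2 with h' | h' | h' | h' <;> subst h <;>
          subst h' <;> simp [tr_σ4]
    exact gen _ _ h'
  · rintro (h | h | h | h) <;> rw [h] <;> simp only [tr_vertex_σ]

theorem tr_vertex_iff_out {o : U.D → Bool} (ho : U.TrOr o) {x y : {d // o d = true}}
    (hx : U.σ x.1 ≠ x.1) :
    U.vertexOf y.1 = U.vertexOf x.1 ↔ y = x ∨ y = trOpp ho x := by
  rw [tr_vertex_iff]
  have h1 : y.1 ≠ U.σ x.1 := by
    intro h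
    have := ho.hσ _ hx
    rw [← h, y.2, x.2] at this; simp at this
  have h2 : y.1 ≠ U.σ (U.σ (U.σ x.1)) := by
    intro h
    have := ho.hσ _ hx
    rw [← ho.σ2, ← h, y.2, x.2] at this; simp at this
  simp only [Subtype.ext_iff, trOpp, h1, h2, false_or, or_false]

theorem tr_transitive_of_conn {o : U.D → Bool} (ho : U.TrOr o) {b : U.D → Bool}
    (hb : U.ConstOnCycles b) (hc : U.SmoothedConnected b) : TrTransitive (trPerm ho hb) := by
  let r : U.D → {d // o d = true} := fun d =>
    if h : o d = true then ⟨d, h⟩ else ⟨U.α d, by rw [ho.hα]; simpa using h⟩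
  have r1 : ∀ d, o d = true → (r d).1 = d := fun d h => by simp [r, h]
  have r2 : ∀ d, o d = false → (r d).1 = U.α d := fun d h => by simp [r, h]
  have key : ∀ a, U.σ a ≠ a → o a = false →
      (trPerm ho hb).SameCycle (r a) (r (U.trans b a)) := by
    intro a ha hoa
    refine ⟨1, ?_⟩
    rw [zpow_one, trPerm_apply]
    apply Subtype.ext
    have e1 := r2 a hoa
    have e2 : U.α (r a).1 = a := by rw [e1, U.α_invol]
    rw [trNext_ne ho b _ (by rw [e2]; rintro rfl; exact ha U.σ_head), e2, r1]
    rw [ho.trans b ha, hoa]; rfl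
  have main : ∀ x y : U.D, Relation.EqvGen (fun a c => U.α a = c ∨ U.trans b a = c) x y →
      (trPerm ho hb).SameCycle (r x) (r y) := by
    intro x y h
    induction h with
    | rel x y h =>
      rcases h with h | h
      · subst h
        have : r (U.α x) = r x := by
          apply Subtype.ext
          by_cases hx : o x = true
          · rw [r1 x hx, r2 _ (by rw [ho.hα, hx]; rfl), U.α_invol]
          · simp only [Bool.not_eq_true] at hx
            rw [r2 x hx, r1 _ (by rw [ho.hα, hx]; rfl)]
        rw [this]
      · by_cases hx : U.σ x = x
        · rw [tr_trans_fix b hx] at h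
          rw [h]
        · by_cases hox : o x = true
          · have hy : U.σ y ≠ y := by
              intro hy
              have := tr_trans_invol hb x
              rw [h, tr_trans_fix b hy] at this
              exact hx (this ▸ hy)
            have := key y hy (by rw [← h, ho.trans b hx, hox]; rfl)
            rw [← h, tr_trans_invol hb] at this
            rw [← h]
            exact this.symm
          · rw [← h]
            exact key x hx (by simpa using hox)
    | refl x => exact Equiv.Perm.SameCycle.refl _ _
    | symm x y _ ih => exact ih.symm
    | trans x y z _ _ i1 i2 => exact i1.trans i2
  intro x y
  have := main x.1 y.1 (hc _ _)
  have ex : ∀ x : {d // o d = true}, r x.1 = x := fun x => Subtype.ext (r1 _ x.2)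
  rwa [ex, ex] at this

theorem tr_conn_of_transitive {o : U.D → Bool} (ho : U.TrOr o) {b : U.D → Bool}
    (hb : U.ConstOnCycles b) (ht : TrTransitive (trPerm ho hb)) : U.SmoothedConnected b := by
  set R : U.D → U.D → Prop := Relation.EqvGen (fun a c => U.α a = c ∨ U.trans b a = c) with hR
  have Rα : ∀ d, R d (U.α d) := fun d => Relation.EqvGen.rel _ _ (Or.inl rfl)
  have Rt : ∀ d, R d (U.trans b d) := fun d => Relation.EqvGen.rel _ _ (Or.inr rfl)
  have Rs : ∀ {d e}, R d e → R e d := fun h => Relation.EqvGen.symm _ _ h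
  have Rtr : ∀ {d e f}, R d e → R e f → R d f := fun h h' => Relation.EqvGen.trans _ _ _ h h'
  have step : ∀ x : {d // o d = true}, U.α x.1 ≠ U.head → R x.1 (trPerm ho hb x).1 := by
    intro x hx
    rw [trPerm_apply, trNext_ne ho b x hx]
    exact Rtr (Rα _) (Rt _)
  let t : {d // o d = true} := ⟨U.tail, ho.ht⟩
  have hth : R U.tail U.head := by
    by_contra hno
    have all : ∀ k : ℕ, R U.tail ((trPerm ho hb ^ k) t).1 := by
      intro k
      induction k with
      | zero => exact Relation.EqvGen.refl _
      | succ k ih =>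
        rw [pow_succ', Equiv.Perm.mul_apply]
        refine Rtr ih (step _ ?_)
        intro h
        apply hno
        rw [← h]
        exact Rtr ih (Rα _)
    have hoh : o (U.α U.head) = true := by rw [ho.hα, ho.hh]; rfl
    obtain ⟨k, -, hk⟩ := (ht t ⟨U.α U.head, hoh⟩).exists_pow_eq'
    have := all k
    rw [hk] at this
    exact hno (Rtr this (Rs (Rα _)))
  have step' : ∀ x : {d // o d = true}, R x.1 (trPerm ho hb x).1 := by
    intro x
    by_cases hx : U.α x.1 = U.head
    · rw [trPerm_apply, trNext_head ho b x hx]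
      refine Rtr (Rα _) ?_
      rw [hx]
      exact Rs hth
    · exact step x hx
  have out : ∀ x : {d // o d = true}, R U.tail x.1 := by
    intro x
    obtain ⟨k, -, hk⟩ := (ht t x).exists_pow_eq'
    rw [← hk]
    clear hk
    induction k with
    | zero => exact Relation.EqvGen.refl _
    | succ k ih =>
      rw [pow_succ', Equiv.Perm.mul_apply]
      exact Rtr ih (step' _)
  have all : ∀ d, R U.tail d := by
    intro d
    by_cases hd : o d = true
    · exact out ⟨d, hd⟩
    · have : o (U.α d) = true := by rw [ho.hα]; simpa using hd
      exact Rtr (out ⟨U.α d, this⟩) (Rs (Rα d))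
  exact fun d e => Rtr (Rs (all d)) (all e)

theorem tr_key {o : U.D → Bool} (ho : U.TrOr o) (T1 T2 : U.Trail)
    (hne : (U.diffSet T1.b T2.b).Nonempty) :
    ∃ T3 : U.Trail, (U.diffSet T1.b T3.b).ncard = 2 ∧
      (U.diffSet T3.b T2.b) ⊂ (U.diffSet T1.b T2.b) := by
  classical
  let S : Set {d // o d = true} := {y | T1.b y.1 ≠ T2.b y.1}
  have hcross : ∀ d, T1.b d ≠ T2.b d → U.σ d ≠ d := by
    intro d hd h
    exact hd ((T1.norm d h).trans (T2.norm d h).symm)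
  have hS : ∀ x ∈ S, trOpp ho x ∈ S ∧ trOpp ho x ≠ x := by
    intro x hx
    refine ⟨?_, ?_⟩
    · show T1.b (U.σ (U.σ x.1)) ≠ T2.b (U.σ (U.σ x.1))
      rw [T1.const, T1.const, T2.const, T2.const]; exact hx
    · intro h
      exact tr_σ2_ne (hcross _ hx) (congrArg Subtype.val h)
  have hSne : S.Nonempty := by
    obtain ⟨v, d, -, hd⟩ := hne
    by_cases h : o d = true
    · exact ⟨⟨d, h⟩, hd⟩
    · refine ⟨⟨U.σ d, by rw [ho.hσ d (hcross d hd)]; simpa using h⟩, ?_⟩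
      show T1.b (U.σ d) ≠ T2.b (U.σ d)
      rw [T1.const, T2.const]; exact hd
  obtain ⟨p, hp, q, hq, hqp, hqp', htr⟩ := tr_double (trPerm ho T1.const) (trPerm ho T2.const)
    (tr_transitive_of_conn ho T1.const T1.conn) (tr_transitive_of_conn ho T2.const T2.conn)
    (trOpp ho) S (trOpp_trOpp ho) hS
    (fun x hx => by
      rw [trPerm_apply, trNext_change ho T1.const T2.const]; exact if_neg hx)
    (fun x hx => by
      rw [trPerm_apply, trNext_change ho T1.const T2.const]; exact if_pos (not_not.1 hx)) hSne
  have hpc := hcross _ hp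
  have hqc := hcross _ hq
  let b3 : U.D → Bool := fun d =>
    if U.vertexOf d = U.vertexOf p.1 ∨ U.vertexOf d = U.vertexOf q.1 then !T1.b d else T1.b d
  have hb3 : U.ConstOnCycles b3 := by
    intro d
    simp only [b3, tr_vertex_σ, T1.const d]
  have hb3eq : ∀ d, T1.b d = b3 d ↔
      ¬ (U.vertexOf d = U.vertexOf p.1 ∨ U.vertexOf d = U.vertexOf q.1) := by
    intro d
    simp only [b3]
    split_ifs with h <;> simp [h]
  have hperm : trPerm ho hb3 = Equiv.swap q (trOpp ho q) *
      (Equiv.swap p (trOpp ho p) * trPerm ho T1.const) := by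
    ext x
    congr 1
    rw [Equiv.Perm.mul_apply, Equiv.Perm.mul_apply, trPerm_apply, trPerm_apply,
      trNext_change ho T1.const hb3]
    generalize trNext ho T1.b x = y
    have e1 : p ≠ q := hqp.symm
    have e2 : trOpp ho p ≠ q := hqp'.symm
    have e3 : p ≠ trOpp ho q := fun h => hqp' (by rw [h, trOpp_trOpp])
    have e4 : trOpp ho p ≠ trOpp ho q := fun h => e1 (by
      rw [← trOpp_trOpp ho p, h, trOpp_trOpp])
    simp only [hb3eq, tr_vertex_iff_out ho hpc, tr_vertex_iff_out ho hqc]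
    by_cases h1 : y = p
    · subst h1
      simp [Equiv.swap_apply_of_ne_of_ne e2 e4]
    by_cases h2 : y = trOpp ho p
    · subst h2
      simp [Equiv.swap_apply_of_ne_of_ne e1 e3, trOpp_trOpp]
    rw [Equiv.swap_apply_of_ne_of_ne h1 h2]
    by_cases h3 : y = q
    · subst h3; simp
    by_cases h4 : y = trOpp ho q
    · subst h4; simp [trOpp_trOpp]
    rw [Equiv.swap_apply_of_ne_of_ne h3 h4]
    simp [h1, h2, h3, h4]
  have hnorm : ∀ d, U.σ d = d → b3 d = false := by
    intro d hd
    rw [← T1.norm d hd, eq_comm, hb3eq]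
    have aux : ∀ e : U.D, U.σ e ≠ e → U.vertexOf d ≠ U.vertexOf e := by
      intro e he h
      rw [eq_comm, tr_vertex_iff] at h
      simp only [hd, or_self] at h
      exact he (h ▸ hd)
    rintro (h | h)
    exacts [aux _ hpc h, aux _ hqc h]
  let T3 : U.Trail := ⟨b3, hb3, hnorm, tr_conn_of_transitive ho hb3 (by rw [hperm]; exact htr)⟩
  refine ⟨T3, ?_, ?_⟩
  · have : U.diffSet T1.b b3 = {U.vertexOf p.1, U.vertexOf q.1} := by
      ext v
      constructor
      · rintro ⟨d, rfl, hd⟩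
        rw [Ne, hb3eq, not_not] at hd
        simpa using hd
      · rintro (h | h)
        · exact ⟨p.1, h.symm, by rw [Ne, hb3eq, not_not]; exact Or.inl rfl⟩
        · exact ⟨q.1, Eq.symm h, by rw [Ne, hb3eq, not_not]; exact Or.inr rfl⟩
    show (U.diffSet T1.b b3).ncard = 2
    rw [this, Set.ncard_pair]
    intro h
    rcases (tr_vertex_iff_out ho hpc).1 h.symm with h | h
    exacts [hqp h, hqp' h]
  · have hdiff : ∀ d, b3 d ≠ T2.b d → T1.b d ≠ T2.b d ∧
        ¬ (U.vertexOf d = U.vertexOf p.1 ∨ U.vertexOf d = U.vertexOf q.1) := by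
      intro d hd
      by_cases h : U.vertexOf d = U.vertexOf p.1 ∨ U.vertexOf d = U.vertexOf q.1
      · exfalso
        have h12 : T1.b d ≠ T2.b d := by
          rcases h with h | h
          · rw [tr_const_vertex T1.const h, tr_const_vertex T2.const h]; exact hp
          · rw [tr_const_vertex T1.const h, tr_const_vertex T2.const h]; exact hq
        have h13 : T1.b d ≠ b3 d := by rw [Ne, hb3eq, not_not]; exact h
        revert hd h12 h13
        cases T1.b d <;> cases T2.b d <;> cases b3 d <;> simp
      · have := (hb3eq d).2 h
        rw [this]
        exact ⟨hd, h⟩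
    rw [Set.ssubset_iff_of_subset]
    · refine ⟨U.vertexOf p.1, ⟨p.1, rfl, hp⟩, ?_⟩
      rintro ⟨d, hdv, hd⟩
      exact (hdiff d hd).2 (Or.inl hdv)
    · rintro v ⟨d, hdv, hd⟩
      exact ⟨d, hdv, (hdiff d hd).1⟩

end LinkoidUniverse

/-- any two trails of a knot-type 1-linkoid universe (both endpoints in
the same face) are related by a finite sequence of double exchanges: each step
resmooths exactly two smoothing sites and yields a trail. -/
theorem trails_related_by_double_exchanges (U : LinkoidUniverse)
    (hknot : U.faceOf U.tail = U.faceOf U.head) (T1 T2 : U.Trail) :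
    Relation.ReflTransGen
      (fun A B : U.Trail => (U.diffSet A.b B.b).ncard = 2) T1 T2 := by
  obtain ⟨o, h1, h2, h3, h4⟩ := U.tr_exists_o hknot
  have ho : U.TrOr o := ⟨h1, h2, h3, h4⟩
  induction hn : (U.diffSet T1.b T2.b).ncard using Nat.strong_induction_on generalizing T1 with
  | _ n ih =>
  rcases (U.diffSet T1.b T2.b).eq_empty_or_nonempty with he | hne
  · have hb : T1.b = T2.b := by
      funext d
      by_contra hd
      have : U.vertexOf d ∈ U.diffSet T1.b T2.b := ⟨d, rfl, hd⟩
      rw [he] at this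
      exact this
    have : T1 = T2 := by
      cases T1; cases T2; cases hb; rfl
    rw [this]
  · obtain ⟨T3, h13, h32⟩ := LinkoidUniverse.tr_key ho T1 T2 hne
    refine Relation.ReflTransGen.head h13 (ih _ ?_ T3 rfl)
    rw [← hn]
    exact Set.ncard_lt_ncard h32 (Set.toFinite _)
end

section
/- Let T1 and T2 be two trails of any 1-linkoid universe. Then T2 can be obtained from T1 by a finite sequence of moves, each of which is either a single exchange (resmoothing one site, when this preserves connectivity) or a double exchange (resmoothing two sites), with every intermediate object being a trail, and each move strictly decreasing the number of sites at which the current trail differs from T2. -/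
namespace LinkoidUniverse

variable (U : LinkoidUniverse)

/-- A Bool-colouring of darts constant along strands. -/
def Inv (b g : U.D → Bool) : Prop :=
  (∀ x, g (U.α x) = g x) ∧ ∀ x, g (U.trans b x) = g x

theorem conn_iff (b : U.D → Bool) :
    U.SmoothedConnected b ↔ ∀ g, U.Inv b g → ∀ x y, g x = g y := by
  constructor
  · intro h g hg x y
    induction h x y with
    | rel a c h =>
      rcases h with h | h
      · rw [← h, hg.1]
      · rw [← h, hg.2]
    | refl => rfl
    | symm _ _ _ ih => exact ih.symm
    | trans _ _ _ _ _ ih1 ih2 => exact ih1.trans ih2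
  · intro h e e'
    classical
    have key := h (fun x => decide (Relation.EqvGen
      (fun a c => U.α a = c ∨ U.trans b a = c) e x)) ?_ e e'
    · have h1 : Relation.EqvGen (fun a c => U.α a = c ∨ U.trans b a = c) e e :=
        Relation.EqvGen.refl e
      simpa [h1] using key
    · constructor
      · intro x
        have hx : Relation.EqvGen (fun a c => U.α a = c ∨ U.trans b a = c) x (U.α x) :=
          Relation.EqvGen.rel _ _ (Or.inl rfl)
        simp only [decide_eq_decide]
        exact ⟨fun k => k.trans _ _ _ (hx.symm _ _), fun k => k.trans _ _ _ hx⟩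
      · intro x
        have hx : Relation.EqvGen (fun a c => U.α a = c ∨ U.trans b a = c) x (U.trans b x) :=
          Relation.EqvGen.rel _ _ (Or.inr rfl)
        simp only [decide_eq_decide]
        exact ⟨fun k => k.trans _ _ _ (hx.symm _ _), fun k => k.trans _ _ _ hx⟩

theorem sig4 (x : U.D) : U.σ (U.σ (U.σ (U.σ x))) = x := by
  by_cases h : U.σ x = x
  · simp [h]
  · exact (U.deg4 x h).1

theorem symm_eq (x : U.D) : U.σ.symm x = U.σ (U.σ (U.σ x)) := by
  rw [Equiv.symm_apply_eq, sig4]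

theorem sig_ne {x : U.D} (h : U.σ x ≠ x) : U.σ (U.σ x) ≠ U.σ x :=
  fun k => h (U.σ.injective k)

theorem vertex_lift {β : Type} {f : U.D → β} (hf : ∀ x, f (U.σ x) = f x) {x y : U.D}
    (h : U.vertexOf x = U.vertexOf y) : f x = f y := by
  have := congrArg (Quot.lift f (fun a b (hab : U.σ a = b) => by rw [← hab, hf])) h
  exact this

theorem vertexOf_sig (x : U.D) : U.vertexOf (U.σ x) = U.vertexOf x :=
  (Quot.sound (r := fun a b : U.D => U.σ a = b) rfl).symm

theorem vertexOf_trans (b : U.D → Bool) (x : U.D) :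
    U.vertexOf (U.trans b x) = U.vertexOf x := by
  unfold trans
  split_ifs
  · exact U.vertexOf_sig x
  · rw [symm_eq]; simp only [vertexOf_sig]

theorem vertex_cases {x y : U.D} (h : U.vertexOf x = U.vertexOf y) :
    x = y ∨ x = U.σ y ∨ x = U.σ (U.σ y) ∨ x = U.σ (U.σ (U.σ y)) := by
  have := U.vertex_lift (f := fun x => x = y ∨ x = U.σ y ∨ x = U.σ (U.σ y) ∨
    x = U.σ (U.σ (U.σ y))) (by
      intro x
      have h4 := U.sig4 y
      apply propext
      constructor
      · rintro (h | h | h | h)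
        · rw [← h4] at h
          have := U.σ.injective h
          tauto
        all_goals
          have := U.σ.injective h
          tauto
      · rintro (h | h | h | h) <;> subst h <;> simp [h4]) h
  exact this.mpr (Or.inl rfl)

theorem trans_invol {b : U.D → Bool} (hb : U.ConstOnCycles b) (x : U.D) :
    U.trans b (U.trans b x) = x := by
  by_cases h : U.σ x = x
  · have h' : U.σ.symm x = x := by rw [Equiv.symm_apply_eq, h]
    have : U.trans b x = x := by unfold trans; split_ifs <;> assumption
    rw [this, this]
  · have h1 := U.sig_ne h
    have h2 := U.sig_ne h1
    have c1 := U.col_alt x h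
    have c2 := U.col_alt _ h1
    have c3 := U.col_alt _ h2
    have b1 := hb x
    have b2 := hb (U.σ x)
    have b3 := hb (U.σ (U.σ x))
    have h4 := U.sig4 x
    unfold trans
    simp only [symm_eq]
    by_cases hc : U.col x = b x
    · simp [hc, c1, b1, h4]
    · simp [hc, c1, c2, c3, b1, b2, b3, h4]

theorem trans_fix {b : U.D → Bool} {x : U.D} (h : U.trans b x = x) :
    x = U.tail ∨ x = U.head := by
  apply U.endpoints_only
  unfold trans at h
  split_ifs at h
  · exact h
  · rw [Equiv.symm_apply_eq] at h; exact h.symm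

theorem trans_of_fix {b : U.D → Bool} {x : U.D} (h : U.σ x = x) : U.trans b x = x := by
  unfold trans; split_ifs
  · exact h
  · rw [Equiv.symm_apply_eq, h]

theorem trans_congr {b c : U.D → Bool} {x : U.D} (h : b x = c x) :
    U.trans b x = U.trans c x := by
  unfold trans; rw [h]

/-- Discrepancy of a colouring at a crossing. -/
def disc (g : U.D → Bool) (x : U.D) : Bool := xor (g x) (g (U.σ (U.σ x)))

/-- The two pairings at a crossing. -/
theorem inv_local {b g : U.D → Bool} (hb : U.ConstOnCycles b) (hg : U.Inv b g) (x : U.D) :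
    (U.col x = b x → g (U.σ x) = g x ∧ g (U.σ (U.σ (U.σ x))) = g (U.σ (U.σ x))) ∧
    (U.col x ≠ b x → g (U.σ (U.σ (U.σ x))) = g x ∧ g (U.σ (U.σ x)) = g (U.σ x)) := by
  by_cases h : U.σ x = x
  · simp [h]
  have h1 := U.sig_ne h
  have c1 := U.col_alt x h
  have c2 := U.col_alt _ h1
  have b1 := hb x
  have b2 := hb (U.σ x)
  have e0 := hg.2 x
  have e1 := hg.2 (U.σ x)
  have e2 := hg.2 (U.σ (U.σ x))
  unfold trans at e0 e1 e2
  simp only [symm_eq, b1, b2, c1, c2] at e0 e1 e2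
  constructor
  · intro hc
    simp only [hc, if_true, Bool.not_not] at e0 e2
    exact ⟨e0, e2⟩
  · intro hc
    have hc' : (!U.col x) = b x := by
      cases hh : U.col x <;> cases hh' : b x <;> simp_all
    simp only [hc, if_false] at e0
    simp only [hc', if_true] at e1
    exact ⟨e0, e1⟩

theorem disc_const {b g : U.D → Bool} (hb : U.ConstOnCycles b) (hg : U.Inv b g) (x : U.D) :
    U.disc g (U.σ x) = U.disc g x := by
  obtain ⟨h1, h2⟩ := U.inv_local hb hg x
  unfold disc
  by_cases hc : U.col x = b x
  · obtain ⟨p, q⟩ := h1 hc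
    rw [p, q]
  · obtain ⟨p, q⟩ := h2 hc
    rw [p, q, Bool.xor_comm]

theorem disc_flip {b g : U.D → Bool} (hb : U.ConstOnCycles b) (hg : U.Inv b g) {x : U.D}
    (hd : U.disc g x = false) (c : U.D → Bool) : g (U.trans c x) = g x := by
  obtain ⟨h1, h2⟩ := U.inv_local hb hg x
  unfold disc at hd
  have hd' : g (U.σ (U.σ x)) = g x := by
    revert hd
    cases g x <;> cases g (U.σ (U.σ x)) <;> simp
  unfold trans
  rw [symm_eq]
  by_cases hc : U.col x = b x
  · obtain ⟨p, q⟩ := h1 hc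
    split_ifs
    · exact p
    · exact q.trans hd'
  · obtain ⟨p, q⟩ := h2 hc
    split_ifs
    · exact q.symm.trans hd'
    · exact p

/-- Changing the smoothing only where the discrepancy vanishes keeps invariance. -/
theorem inv_change {b c g : U.D → Bool} (hb : U.ConstOnCycles b) (hg : U.Inv b g)
    (h : ∀ x, b x ≠ c x → U.disc g x = false) : U.Inv c g := by
  refine ⟨hg.1, fun x => ?_⟩
  by_cases hx : b x = c x
  · rw [← U.trans_congr hx, hg.2]
  · exact U.disc_flip hb hg (h x hx) c

theorem even_of_invol {D : Type} [DecidableEq D] (S : Finset D) (f : D → D)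
    (hf : ∀ x ∈ S, f (f x) = x) (hS : ∀ x ∈ S, f x ∈ S) :
    S.card % 2 = (S.filter (fun x => f x = x)).card % 2 := by
  have h := Finset.sum_involution (s := S.filter (fun x => f x ≠ x)) (f := fun _ => (1 : ZMod 2))
    (fun x _ => f x) (fun _ _ => by decide) (fun x hx _ => (Finset.mem_filter.1 hx).2)
    (fun x hx => by
      have hx := Finset.mem_filter.1 hx
      refine Finset.mem_filter.2 ⟨hS x hx.1, ?_⟩
      rw [hf x hx.1]; exact fun k => hx.2 k.symm)
    (fun x hx => hf x (Finset.mem_filter.1 hx).1)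
  rw [Finset.sum_const, nsmul_eq_mul, mul_one, ZMod.natCast_eq_zero_iff] at h
  have h2 := Finset.card_filter_add_card_filter_not (s := S) (fun x => f x = x)
  simp only [ne_eq] at h
  omega

theorem parity (S : Finset U.D) (f : U.D → U.D) (hα : ∀ x ∈ S, U.α x ∈ S)
    (hf : ∀ x ∈ S, f (f x) = x) (hS : ∀ x ∈ S, f x ∈ S) (y : U.D)
    (hy : ∀ x ∈ S, f x = x ↔ x = y) (hyS : y ∈ S) : False := by
  have h1 := even_of_invol S f hf hS
  have h2 := even_of_invol S U.α (fun x _ => U.α_invol x) hα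
  have e1 : S.filter (fun x => f x = x) = {y} := by
    ext x
    simp only [Finset.mem_filter, Finset.mem_singleton]
    constructor
    · rintro ⟨a, b⟩; exact (hy x a).1 b
    · rintro rfl; exact ⟨hyS, (hy x hyS).2 rfl⟩
  have e2 : S.filter (fun x => U.α x = x) = ∅ := by
    ext x; simp [U.α_ne]
  rw [e1] at h1; rw [e2] at h2
  simp at h1 h2
  omega

theorem head_tail {b g : U.D → Bool} (hb : U.ConstOnCycles b) (hg : U.Inv b g) :
    g U.head = g U.tail := by
  by_contra hne
  refine U.parity (Finset.univ.filter (fun x => g x = g U.tail)) (U.trans b) ?_ ?_ ?_ U.tail ?_ ?_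
  · intro x hx; simpa [hg.1] using hx
  · intro x _; exact U.trans_invol hb x
  · intro x hx; simpa [hg.2] using hx
  · intro x hx
    simp only [Finset.mem_filter, Finset.mem_univ, true_and] at hx
    constructor
    · intro h
      rcases U.trans_fix h with h | h
      · exact h
      · rw [h] at hx; exact absurd hx hne
    · rintro rfl; exact U.trans_of_fix U.σ_tail
  · simp

/-- Key joining lemma. -/
theorem join {b c χ g : U.D → Bool} (hb : U.ConstOnCycles b) (hc : U.ConstOnCycles c)
    (hχ : U.Inv b χ) (hg : U.Inv c g) {e : U.D}
    (hbc : ∀ x, b x ≠ c x ↔ U.vertexOf x = U.vertexOf e)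
    (h1 : U.disc χ e = true) : U.disc g e = false := by
  by_contra h2
  rw [Bool.not_eq_false] at h2
  classical
  have he : b e ≠ c e := (hbc e).2 rfl
  obtain ⟨p1, p2⟩ := U.inv_local hb hχ e
  obtain ⟨q1, q2⟩ := U.inv_local hc hg e
  have hval : (χ (U.σ e) = χ e ∧ χ (U.σ (U.σ e)) = (!χ e) ∧ χ (U.σ (U.σ (U.σ e))) = (!χ e) ∧
      g (U.σ e) = (!g e) ∧ g (U.σ (U.σ e)) = (!g e) ∧ g (U.σ (U.σ (U.σ e))) = g e) ∨
      (χ (U.σ e) = (!χ e) ∧ χ (U.σ (U.σ e)) = (!χ e) ∧ χ (U.σ (U.σ (U.σ e))) = χ e ∧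
      g (U.σ e) = g e ∧ g (U.σ (U.σ e)) = (!g e) ∧ g (U.σ (U.σ (U.σ e))) = (!g e)) := by
    unfold disc at h1 h2
    have k1 : χ (U.σ (U.σ e)) = (!χ e) := by
      revert h1; cases χ e <;> cases χ (U.σ (U.σ e)) <;> simp
    have k2 : g (U.σ (U.σ e)) = (!g e) := by
      revert h2; cases g e <;> cases g (U.σ (U.σ e)) <;> simp
    by_cases hb' : U.col e = b e
    · obtain ⟨r1, r2⟩ := p1 hb'
      obtain ⟨r3, r4⟩ := q2 (by rw [hb']; exact he)
      exact Or.inl ⟨r1, k1, r2.trans k1, r4.symm.trans k2, k2, r3⟩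
    · obtain ⟨r1, r2⟩ := p2 hb'
      obtain ⟨r3, r4⟩ := q1 (by
        revert hb' he; cases U.col e <;> cases b e <;> cases c e <;> simp)
      exact Or.inr ⟨r2.symm.trans k1, k1, r1, r3, k2, r4.trans k2⟩
  -- a dart of the crossing in the prescribed class, unique
  have huniq : ∃ y, U.vertexOf y = U.vertexOf e ∧ (χ y ≠ χ U.tail ∧ g y = true) ∧
      ∀ x, U.vertexOf x = U.vertexOf e → (χ x ≠ χ U.tail ∧ g x = true) → x = y := by
    have hv1 := U.vertexOf_sig e
    have hv2 := (U.vertexOf_sig (U.σ e)).trans hv1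
    have hv3 := (U.vertexOf_sig (U.σ (U.σ e))).trans hv2
    have hex : ∃ y, U.vertexOf y = U.vertexOf e ∧ (χ y ≠ χ U.tail ∧ g y = true) := by
      by_contra hno
      push Not at hno
      have n0 := hno _ rfl
      have n1 := hno _ hv1
      have n2 := hno _ hv2
      have n3 := hno _ hv3
      clear hno hbc
      rcases hval with ⟨z1, z2, z3, z4, z5, z6⟩ | ⟨z1, z2, z3, z4, z5, z6⟩ <;>
      · simp only [z1, z2, z3, z4, z5, z6] at n0 n1 n2 n3
        revert n0 n1 n2 n3
        generalize χ e = a1, g e = a2, χ U.tail = a3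
        revert a1 a2 a3
        decide
    obtain ⟨y, hy1, hy2⟩ := hex
    refine ⟨y, hy1, hy2, fun x hx1 hx2 => ?_⟩
    clear hbc
    rcases hval with ⟨z1, z2, z3, z4, z5, z6⟩ | ⟨z1, z2, z3, z4, z5, z6⟩ <;>
    rcases U.vertex_cases hx1 with hx | hx | hx | hx <;>
    rcases U.vertex_cases hy1 with hy | hy | hy | hy <;>
    first
    | exact hx.trans hy.symm
    | (exfalso
       rw [hx] at hx2
       rw [hy] at hy2
       simp only [z1, z2, z3, z4, z5, z6] at hx2 hy2
       revert hx2 hy2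
       generalize χ e = a1, g e = a2, χ U.tail = a3
       revert a1 a2 a3
       decide)
  obtain ⟨y, hy1, hy2, hy3⟩ := huniq
  have hht := U.head_tail hb hχ
  refine U.parity (Finset.univ.filter (fun x => χ x ≠ χ U.tail ∧ g x = true))
    (fun x => if U.vertexOf x = U.vertexOf e then x else U.trans b x) ?_ ?_ ?_ y ?_ ?_
  · intro x hx; simpa [hχ.1, hg.1] using hx
  · intro x _
    by_cases hx : U.vertexOf x = U.vertexOf e
    · simp [hx]
    · simp [hx, vertexOf_trans, U.trans_invol hb]
  · intro x hx
    by_cases hxe : U.vertexOf x = U.vertexOf e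
    · simpa [hxe] using hx
    · have hbx : b x = c x := by
        by_contra k; exact hxe ((hbc x).1 k)
      have : g (U.trans b x) = g x := by rw [U.trans_congr hbx, hg.2]
      simpa [hxe, hχ.2, this] using hx
  · intro x hx
    simp only [Finset.mem_filter, Finset.mem_univ, true_and] at hx
    by_cases hxe : U.vertexOf x = U.vertexOf e
    · simp only [hxe, if_true, true_iff]; exact hy3 x hxe hx
    · simp only [hxe, if_false]
      constructor
      · intro k
        rcases U.trans_fix k with k | k
        · exact absurd (by rw [k]) hx.1
        · exact absurd (by rw [k, hht]) hx.1
      · rintro rfl; exact absurd hy1 hxe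
  · simpa using hy2

open Classical in
/-- Use the target smoothing on `W`, the source smoothing elsewhere. -/
noncomputable def mix (a t : U.D → Bool) (W : Set U.Vertex) : U.D → Bool :=
  fun d => if U.vertexOf d ∈ W then t d else a d

theorem mix_const {a t : U.D → Bool} (ha : U.ConstOnCycles a) (ht : U.ConstOnCycles t)
    (W : Set U.Vertex) : U.ConstOnCycles (U.mix a t W) := by
  intro d; unfold mix; rw [vertexOf_sig, ha, ht]

/-- Some set of one or two differing sites can be resmoothed. -/
theorem exists_exchange (A T : U.Trail) (hne : A.b ≠ T.b) :
    ∃ W : Set U.Vertex, W ⊆ U.diffSet A.b T.b ∧ (W.ncard = 1 ∨ W.ncard = 2) ∧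
      U.SmoothedConnected (U.mix A.b T.b W) := by
  obtain ⟨d, hd⟩ := Function.ne_iff.1 hne
  have same : ∀ x y, U.vertexOf x = U.vertexOf y → A.b x = A.b y ∧ T.b x = T.b y :=
    fun x y h => ⟨U.vertex_lift A.const h, U.vertex_lift T.const h⟩
  by_cases hc : U.SmoothedConnected (U.mix A.b T.b {U.vertexOf d})
  · exact ⟨{U.vertexOf d}, by simpa using ⟨d, rfl, hd⟩, Or.inl (Set.ncard_singleton _), hc⟩
  have hbc := U.mix_const A.const T.const {U.vertexOf d}
  set b := U.mix A.b T.b {U.vertexOf d} with hbdef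
  have hAb : ∀ x, b x ≠ A.b x → U.vertexOf x = U.vertexOf d := by
    intro x hx
    by_contra k
    apply hx
    simp [hbdef, mix, k]
  have hcA := (U.conn_iff A.b).1 A.conn
  have hcT := (U.conn_iff T.b).1 T.conn
  have hbconst : ∀ g, U.Inv b g → U.disc g d = false → ∀ x y, g x = g y := by
    intro g hg hgd
    apply hcA
    refine U.inv_change hbc hg fun x hx => ?_
    rw [← hgd]
    exact U.vertex_lift (U.disc_const hbc hg) (hAb x hx)
  rw [conn_iff] at hc
  push Not at hc
  obtain ⟨χ, hχ, x0, y0, hxy⟩ := hc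
  have hχd : U.disc χ d = true := by
    by_contra k
    exact hxy (hbconst χ hχ (by simpa using k) x0 y0)
  have hex : ∃ e, χ (U.trans T.b e) ≠ χ e := by
    by_contra k
    push Not at k
    exact hxy (hcT χ ⟨hχ.1, k⟩ x0 y0)
  obtain ⟨e, he⟩ := hex
  have hbe : b e ≠ T.b e := by
    intro k
    apply he
    rw [← U.trans_congr k, hχ.2]
  have hχe : U.disc χ e = true := by
    by_contra k
    exact he (U.disc_flip hbc hχ (by simpa using k) _)
  have hed : U.vertexOf e ≠ U.vertexOf d := by
    intro k; apply hbe; simp [hbdef, mix, k]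
  have hAe : A.b e ≠ T.b e := by
    intro k; apply hbe; simp [hbdef, mix, hed, k]
  refine ⟨{U.vertexOf d, U.vertexOf e}, ?_, Or.inr (Set.ncard_pair hed.symm), ?_⟩
  · rintro v (rfl | rfl)
    · exact ⟨d, rfl, hd⟩
    · exact ⟨e, rfl, hAe⟩
  have hcc := U.mix_const A.const T.const {U.vertexOf d, U.vertexOf e}
  set c := U.mix A.b T.b {U.vertexOf d, U.vertexOf e} with hcdef
  have hbcv : ∀ x, b x ≠ c x ↔ U.vertexOf x = U.vertexOf e := by
    intro x
    by_cases hx : U.vertexOf x = U.vertexOf e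
    · obtain ⟨s1, s2⟩ := same x e hx
      simp [hbdef, hcdef, mix, hx, hed, s1, s2, hAe]
    · by_cases hx' : U.vertexOf x = U.vertexOf d
      · simp [hbdef, hcdef, mix, hx', hed.symm]
      · simp [hbdef, hcdef, mix, hx', hx]
  rw [conn_iff]
  intro g hg
  have hge := U.join hbc hcc hχ hg hbcv hχe
  have hgb : U.Inv b g := by
    refine U.inv_change hcc hg fun x hx => ?_
    rw [← hge]
    exact U.vertex_lift (U.disc_const hcc hg) ((hbcv x).1 hx.symm)
  by_cases hgd : U.disc g d = false
  · exact hbconst g hgb hgd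
  · exfalso
    have hk := hbconst (fun x => xor (g x) (χ x))
      ⟨fun x => by simp only [hgb.1, hχ.1], fun x => by simp only [hgb.2, hχ.2]⟩
      (by
        simp only [disc] at hgd hχd ⊢
        revert hgd hχd
        generalize g d = a1, g (U.σ (U.σ d)) = a2, χ d = a3, χ (U.σ (U.σ d)) = a4
        revert a1 a2 a3 a4
        decide) e (U.σ (U.σ e))
    simp only [disc] at hge hχe
    revert hk hge hχe
    generalize g e = a1, g (U.σ (U.σ e)) = a2, χ e = a3, χ (U.σ (U.σ e)) = a4
    revert a1 a2 a3 a4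
    decide

theorem diff_mix_left (A T : U.Trail) {W : Set U.Vertex} (hW : W ⊆ U.diffSet A.b T.b) :
    U.diffSet A.b (U.mix A.b T.b W) = W := by
  ext v
  constructor
  · rintro ⟨d, rfl, h⟩
    by_contra k
    apply h
    simp [mix, k]
  · intro hv
    obtain ⟨d, rfl, h⟩ := hW hv
    exact ⟨d, rfl, by simpa [mix, hv] using h⟩

theorem diff_mix_right (A T : U.Trail) (W : Set U.Vertex) :
    U.diffSet (U.mix A.b T.b W) T.b ⊆ U.diffSet A.b T.b \ W := by
  rintro v ⟨d, rfl, h⟩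
  by_cases k : U.vertexOf d ∈ W
  · simp [mix, k] at h
  · exact ⟨⟨d, rfl, by simpa [mix, k] using h⟩, k⟩

end LinkoidUniverse

/-- any two trails of a 1-linkoid universe are related by a finite
sequence of single exchanges (resmoothing one site) or double exchanges (resmoothing
two sites), every intermediate object being a trail, and every move strictly
decreasing the number of sites at which the current trail differs from the target. -/
theorem trails_related_by_exchanges (U : LinkoidUniverse) (T1 T2 : U.Trail) :
    Relation.ReflTransGen
      (fun A B : U.Trail =>
        ((U.diffSet A.b B.b).ncard = 1 ∨ (U.diffSet A.b B.b).ncard = 2) ∧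
        (U.diffSet B.b T2.b).ncard < (U.diffSet A.b T2.b).ncard) T1 T2 := by
  generalize hn : (U.diffSet T1.b T2.b).ncard = n
  induction n using Nat.strong_induction_on generalizing T1 with
  | _ n ih =>
    by_cases hb : T1.b = T2.b
    · have : T1 = T2 := by
        cases T1; cases T2; simp only at hb; subst hb; rfl
      rw [this]
    · obtain ⟨W, hW, hcard, hconn⟩ := U.exists_exchange T1 T2 hb
      let B : U.Trail :=
        { b := U.mix T1.b T2.b W
          const := U.mix_const T1.const T2.const W
          norm := fun d hd => by
            simp [LinkoidUniverse.mix, T1.norm d hd, T2.norm d hd]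
          conn := hconn }
      have hfin : Finite U.Vertex := Finite.of_surjective U.vertexOf Quot.mk_surjective
      have hlt : (U.diffSet B.b T2.b).ncard < (U.diffSet T1.b T2.b).ncard := by
        apply Set.ncard_lt_ncard _ (Set.toFinite _)
        have hsub := U.diff_mix_right T1 T2 W
        have hWne : W.Nonempty := by
          apply Set.nonempty_of_ncard_ne_zero; omega
        obtain ⟨w, hw⟩ := hWne
        refine ⟨fun v hv => (hsub hv).1, fun k => ?_⟩
        exact (hsub (k (hW hw))).2 hw
      refine Relation.ReflTransGen.head ⟨?_, hlt⟩ (ih _ (hn ▸ hlt) B rfl)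
      have : U.diffSet T1.b B.b = W := U.diff_mix_left T1 T2 hW
      rw [this]; exact hcard
end
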